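/- arXiv:0807.0916 — 2 statements merged into one kernel-verified Lean document; each statement's English description precedes it below -/
import Mathlib

section
/- Let b = 2l+1 be an odd integer with l ≥ 1, and let r1, r2, r3 be the permutations of {1, 2, …, b} defined by: r1(i) = b − i for 1 ≤ i ≤ b−1 and r1(b) = b; r2(1) = 1, r2(b) = b, and r2(i) = b+1−i for 2 ≤ i ≤ b−1; r3(i) = b+1−i for all 1 ≤ i ≤ b. Then the symmetric group Sym_b on {1, …, b} is generated by r1, r2 and r3. -/
/-- For odd `b = 2l+1` with `l ≥ 1`, the symmetric group on `{1, …, b}`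
(realized as `Fin b`, where `i : Fin b` represents the point `i + 1`) is
generated by the three involutions
`r1 = (1, b−1)(2, b−2)⋯(l, l+1)`, `r2 = (2, b−1)(3, b−2)⋯(l, l+2)` and
`r3 = (1, b)(2, b−1)⋯(l, l+2)`. -/
theorem stmt_1 (l b : ℕ) (hl : 1 ≤ l) (hb : b = 2 * l + 1)
    (r1 r2 r3 : Equiv.Perm (Fin b))
    -- r1 sends the point labelled `k` (i.e. `k = i + 1`) to `b - k` for
    -- `1 ≤ k ≤ b - 1`, and fixes the point labelled `b`:
    (hr1 : ∀ i : Fin b,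
      ((i : ℕ) + 1 ≤ b - 1 → ((r1 i : ℕ) + 1 = b - ((i : ℕ) + 1))) ∧
      ((i : ℕ) + 1 = b → r1 i = i))
    -- r2 fixes the points labelled `1` and `b`, and sends the point
    -- labelled `k` to `b + 1 - k` for `2 ≤ k ≤ b - 1`:
    (hr2 : ∀ i : Fin b,
      (((i : ℕ) + 1 = 1 ∨ (i : ℕ) + 1 = b) → r2 i = i) ∧
      (2 ≤ (i : ℕ) + 1 → (i : ℕ) + 1 ≤ b - 1 →
        ((r2 i : ℕ) + 1 = b + 1 - ((i : ℕ) + 1))))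
    -- r3 sends the point labelled `k` to `b + 1 - k` for all `1 ≤ k ≤ b`:
    (hr3 : ∀ i : Fin b, (r3 i : ℕ) + 1 = b + 1 - ((i : ℕ) + 1)) :
    Subgroup.closure {r1, r2, r3} = (⊤ : Subgroup (Equiv.Perm (Fin b))) := by
  subst hb
  have hrot : r3 * r1 = finRotate (2 * l + 1) := by
    ext i
    have h3 := hr3 (r1 i)
    have h1 := hr1 i
    have hi := i.isLt
    rw [Equiv.Perm.mul_apply, coe_finRotate]
    split_ifs with h
    · have := h1.2 (by rw [h]; simp)
      rw [this] at h3
      rw [this]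
      have hv : (i : ℕ) = 2 * l := by rw [h]; simp
      omega
    · have hv : (i : ℕ) ≠ 2 * l := fun hv => h (Fin.ext (by simpa using hv))
      have := h1.1 (by omega)
      omega
  have hrl : finRotate (2 * l + 1) (Fin.last (2 * l)) = 0 := finRotate_last
  have hsw : r2 * r3 =
      Equiv.swap (Fin.last (2 * l)) (finRotate (2 * l + 1) (Fin.last (2 * l))) := by
    rw [hrl]
    ext i
    have h3 := hr3 i
    have h2 := hr2 (r3 i)
    have hi := i.isLt
    rw [Equiv.Perm.mul_apply, Equiv.swap_apply_def]
    split_ifs with h h'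
    · have hv : (i : ℕ) = 2 * l := by rw [h]; simp
      rw [h2.1 (by omega)]
      simp only [Fin.val_zero]
      omega
    · have hv : (i : ℕ) = 0 := by rw [h']; simp
      rw [h2.1 (by omega)]
      simp only [Fin.val_last]
      omega
    · have hv : (i : ℕ) ≠ 2 * l := fun hv => h (Fin.ext (by simpa using hv))
      have hv' : (i : ℕ) ≠ 0 := fun hv => h' (Fin.ext (by simpa using hv))
      have := h2.2 (by omega) (by omega)
      omega
  have m1 : r1 ∈ Subgroup.closure {r1, r2, r3} := Subgroup.subset_closure (by simp)
  have m2 : r2 ∈ Subgroup.closure {r1, r2, r3} := Subgroup.subset_closure (by simp)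
  have m3 : r3 ∈ Subgroup.closure {r1, r2, r3} := Subgroup.subset_closure (by simp)
  have hc : (finRotate (2 * l + 1)).IsCycle := isCycle_finRotate_of_le (by omega)
  have hs : (finRotate (2 * l + 1)).support = Finset.univ :=
    support_finRotate_of_le (by omega)
  rw [eq_top_iff, ← Equiv.Perm.closure_cycle_adjacent_swap hc hs (Fin.last (2 * l)),
    Subgroup.closure_le, Set.insert_subset_iff, Set.singleton_subset_iff, ← hsw, ← hrot]
  exact ⟨mul_mem m3 m1, mul_mem m2 m3⟩
end

section
/- For every integer n ≥ 2, the symmetric group Sym_n on n letters can be generated by three elements each of which has order dividing 2 (i.e., by three involutions, where the identity is permitted). -/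
/-- For every `n ≥ 2`, the symmetric group on `n` letters is generated by
three elements each of order dividing 2 (three involutions, the identity
being permitted). -/
theorem stmt_8 (n : ℕ) (hn : 2 ≤ n) :
    ∃ s₁ s₂ s₃ : Equiv.Perm (Fin n),
      s₁ ^ 2 = 1 ∧ s₂ ^ 2 = 1 ∧ s₃ ^ 2 = 1 ∧
      Subgroup.closure {s₁, s₂, s₃} = ⊤ := by
  obtain ⟨m, rfl⟩ : ∃ m, n = m + 2 := ⟨n - 2, by omega⟩
  refine ⟨Equiv.subLeft 1, Equiv.neg _, Equiv.swap 0 (finRotate _ 0), ?_, ?_, ?_, ?_⟩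
  · ext x; simp [pow_two]
  · ext x; simp [pow_two]
  · simp [pow_two]
  · have h : finRotate (m + 2) = (Equiv.subLeft 1 : Equiv.Perm (Fin (m+2))) * Equiv.neg _ := by
      refine Equiv.ext fun x => ?_
      simp [finRotate_succ_apply, add_comm]
    rw [eq_top_iff, ← Equiv.Perm.closure_cycle_adjacent_swap (isCycle_finRotate (n := m))
      support_finRotate 0, Subgroup.closure_le]
    rintro g (rfl | rfl)
    · rw [h]
      exact Subgroup.mul_mem _ (Subgroup.subset_closure (by simp))
        (Subgroup.subset_closure (by simp))
    · exact Subgroup.subset_closure (by simp)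
end
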